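/- Let W be a seven-dimensional complex vector space with a basis E₁,…,E₇ and dual basis E¹,…,E⁷, and write E^{ijk} := E^i∧E^j∧E^k. Let φ := E^{127}+E^{347}+E^{567}+E^{135}−E^{146}−E^{236}−E^{245} ∈ Λ³W*. Then (ρ(φ), l(φ), r(φ), m(φ)) = (7,4,2,2). -/

import Mathlib

open Module

section Machinery

variable {F : Type*} [Field F] {M : Type*} [AddCommGroup M] [Module F M]

/-- `X` is a decomposable `k`-vector, with factors taken from the ambient subspace `A`. -/
def Dec (A : Submodule F M) (k : ℕ) (X : ExteriorAlgebra F M) : Prop :=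
  ∃ v : Fin k → M, (∀ i, v i ∈ A) ∧ X = (List.ofFn fun i => ExteriorAlgebra.ι F (v i)).prod

/-- `X` is a sum of `l` decomposable `k`-vectors with factors from `A`. -/
def LenLE (A : Submodule F M) (k l : ℕ) (X : ExteriorAlgebra F M) : Prop :=
  ∃ Y : Fin l → ExteriorAlgebra F M, (∀ i, Dec A k (Y i)) ∧ X = ∑ i, Y i

/-- `X` has (irreducible) length `l` as a `k`-vector: it is a sum of `l` decomposable
`k`-vectors, and of no smaller number of them. -/
def HasLen (A : Submodule F M) (k l : ℕ) (X : ExteriorAlgebra F M) : Prop :=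
  LenLE A k l X ∧ ∀ j < l, ¬ LenLE A k j X

/-- The (irreducible) length of the `k`-vector `X`. -/
noncomputable def len (A : Submodule F M) (k : ℕ) (X : ExteriorAlgebra F M) : ℕ :=
  sInf {l | LenLE A k l X}

/-- `X` belongs to `Λ^k W`, regarded as a subspace of the exterior algebra. -/
def memPow (W : Submodule F M) (k : ℕ) (X : ExteriorAlgebra F M) : Prop :=
  X ∈ (W.map (ExteriorAlgebra.ι F)) ^ k

/-- The support `[X]` of the `k`-vector `X`: the intersection of all subspaces `W`
with `X ∈ Λ^k W`. -/
noncomputable def supp (k : ℕ) (X : ExteriorAlgebra F M) : Submodule F M :=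
  sInf {W | memPow W k X}

/-- The rank `ρ(X) = dim [X]` of the `k`-vector `X`. -/
noncomputable def rkInv (k : ℕ) (X : ExteriorAlgebra F M) : ℕ :=
  Module.finrank F (supp k X)

/-- `(v, W, X₁, X₂)` is an admissible splitting `X = X₁ ∧ v + X₂` of the `k`-vector `X`:
`v ∈ [X] ∖ {0}`, `W` is a complement of `span v` in `[X]`, `X₁ ∈ Λ^(k-1) W` and
`X₂ ∈ Λ^k W`. -/
def Split (k : ℕ) (X : ExteriorAlgebra F M) (v : M) (W : Submodule F M)
    (X₁ X₂ : ExteriorAlgebra F M) : Prop :=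
  v ∈ supp k X ∧ v ≠ 0 ∧
    W ⊔ Submodule.span F {v} = supp k X ∧ W ⊓ Submodule.span F {v} = ⊥ ∧
    memPow W (k - 1) X₁ ∧ memPow W k X₂ ∧
    X = X₁ * ExteriorAlgebra.ι F v + X₂

/-- The invariant `m(X) = min { l(X₁) }` over all admissible splittings of `X`. -/
noncomputable def mInv (A : Submodule F M) (k : ℕ) (X : ExteriorAlgebra F M) : ℕ :=
  sInf {l | ∃ v W X₁ X₂, Split k X v W X₁ X₂ ∧ HasLen A (k - 1) l X₁}

/-- The invariant `r(X) = min { l(X₂) }` over all admissible splittings of `X`. -/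
noncomputable def rInv (A : Submodule F M) (k : ℕ) (X : ExteriorAlgebra F M) : ℕ :=
  sInf {l | ∃ v W X₁ X₂, Split k X v W X₁ X₂ ∧ HasLen A k l X₂}

end Machinery

/-- The wedge product `b i ∧ b j ∧ b k` of three vectors. -/
noncomputable def wedge3 {F : Type*} [Field F] {M : Type*} [AddCommGroup M] [Module F M]
    (b : Fin 7 → M) (i j k : Fin 7) : ExteriorAlgebra F M :=
  ExteriorAlgebra.ι F (b i) * ExteriorAlgebra.ι F (b j) * ExteriorAlgebra.ι F (b k)

/-- The standard `(G₂)_ℂ` three-form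
`φ = E^{127}+E^{347}+E^{567}+E^{135}-E^{146}-E^{236}-E^{245}`, with `0`-based indices. -/
noncomputable def phiStd {F : Type*} [Field F] {M : Type*} [AddCommGroup M] [Module F M]
    (E : Fin 7 → M) : ExteriorAlgebra F M :=
  wedge3 E 0 1 6 + wedge3 E 2 3 6 + wedge3 E 4 5 6 + wedge3 E 0 2 4 -
    wedge3 E 0 3 5 - wedge3 E 1 2 5 - wedge3 E 1 3 4

section Helpers

variable {M : Type*} [AddCommGroup M] [Module ℂ M]

local notation "ιι" => ExteriorAlgebra.ι ℂ (M := M)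

/-- Left contraction. -/
noncomputable def ctr (d : Dual ℂ M) : ExteriorAlgebra ℂ M →ₗ[ℂ] ExteriorAlgebra ℂ M :=
  CliffordAlgebra.contractLeft (Q := (0 : QuadraticForm ℂ M)) d

theorem ctr_mul (d : Dual ℂ M) (x : M) (Y : ExteriorAlgebra ℂ M) :
    ctr d (ιι x * Y) = d x • Y - ιι x * ctr d Y :=
  CliffordAlgebra.contractLeft_ι_mul d x Y

theorem ctr_one (d : Dual ℂ M) (x : M) :
    ctr d (ιι x) = algebraMap ℂ _ (d x) :=
  CliffordAlgebra.contractLeft_ι (Q := (0 : QuadraticForm ℂ M)) d x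

theorem ctr_two (d : Dual ℂ M) (x y : M) :
    ctr d (ιι x * ιι y) = d x • ιι y - d y • ιι x := by
  rw [ctr_mul, ctr_one, Algebra.algebraMap_eq_smul_one, mul_smul_comm, mul_one]

theorem ctr_three (d : Dual ℂ M) (x y z : M) :
    ctr d (ιι x * ιι y * ιι z) =
      d x • (ιι y * ιι z) - d y • (ιι x * ιι z) + d z • (ιι x * ιι y) := by
  rw [mul_assoc, ctr_mul, ctr_two, mul_sub, mul_smul_comm, mul_smul_comm]
  abel

/-- Evaluation of a two-vector. -/
noncomputable def ev (p q : Dual ℂ M) : ExteriorAlgebra ℂ M →ₗ[ℂ] ℂ :=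
  (ExteriorAlgebra.algebraMapInv (R := ℂ) (M := M)).toLinearMap ∘ₗ ctr q ∘ₗ ctr p

theorem ev_two (p q : Dual ℂ M) (x y : M) :
    ev p q (ιι x * ιι y) = p x * q y - p y * q x := by
  simp [ev, ctr_two, ctr_one]

/-- Plücker relations. -/
def Plu (α : ExteriorAlgebra ℂ M) : Prop :=
  ∀ a b c e : Dual ℂ M, ev a b α * ev c e α - ev a c α * ev b e α + ev a e α * ev b c α = 0

theorem plu_two (x y : M) : Plu (ιι x * ιι y) := by
  intro a b c e
  simp only [ev_two]
  ring

theorem plu_three (d : Dual ℂ M) (x y z : M) : Plu (ctr d (ιι x * ιι y * ιι z)) := by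
  intro a b c e
  simp only [ctr_three, map_add, map_sub, map_smul, ev_two, smul_eq_mul]
  ring

theorem key (B : Basis (Fin 7) ℂ M) (d : Dual ℂ M)
    (h : Plu (ctr d (phiStd (F := ℂ) B))) : d = 0 := by
  have H : ∀ i j k l : Fin 7, _ := fun i j k l =>
    h (B.coord i) (B.coord j) (B.coord k) (B.coord l)
  have h1 := H 0 1 2 3
  have h2 := H 0 1 4 5
  have h3 := H 2 3 4 5
  have h4 := H 0 2 5 6
  have h5 := H 0 3 4 6
  have h6 := H 1 2 4 6
  have h7 := H 1 3 5 6
  simp [phiStd, wedge3, ctr_three, ev_two, Finsupp.single_apply] at h1 h2 h3 h4 h5 h6 h7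
  refine B.ext fun i => ?_
  have hi : d (B i) ^ 2 = 0 := by
    fin_cases i <;> simp <;> grind
  simpa using hi

theorem exists_dual {U : Submodule ℂ M} (hU : U ≠ ⊤) :
    ∃ d : Dual ℂ M, d ≠ 0 ∧ ∀ x ∈ U, d x = 0 := by
  obtain ⟨d, hd, h⟩ := Submodule.exists_le_ker_of_lt_top U (lt_top_iff_ne_top.2 hU)
  exact ⟨d, hd, fun x hx => h hx⟩

theorem exists_dual_small [FiniteDimensional ℂ M] {n : ℕ} (hn : n < finrank ℂ M)
    (f : Fin n → M) : ∃ d : Dual ℂ M, d ≠ 0 ∧ ∀ i, d (f i) = 0 := by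
  have : Submodule.span ℂ (Set.range f) ≠ ⊤ := by
    intro h
    have h1 := finrank_range_le_card (R := ℂ) f
    rw [Set.finrank, h, finrank_top] at h1
    simp at h1
    omega
  obtain ⟨d, hd, h⟩ := exists_dual this
  exact ⟨d, hd, fun i => h _ (Submodule.subset_span ⟨i, rfl⟩)⟩

theorem memPow_two_ind {U : Submodule ℂ M} {P : ExteriorAlgebra ℂ M → Prop}
    (h1 : ∀ x ∈ U, ∀ y ∈ U, P (ιι x * ιι y)) (h2 : ∀ X Y, P X → P Y → P (X + Y))
    {X : ExteriorAlgebra ℂ M} (hX : memPow U 2 X) : P X := by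
  unfold memPow at hX
  rw [pow_two] at hX
  refine Submodule.mul_induction_on hX ?_ h2
  rintro _ ⟨x, hx, rfl⟩ _ ⟨y, hy, rfl⟩
  exact h1 x hx y hy

theorem memPow_three_ind {U : Submodule ℂ M} {P : ExteriorAlgebra ℂ M → Prop}
    (h1 : ∀ x ∈ U, ∀ y ∈ U, ∀ z ∈ U, P (ιι x * ιι y * ιι z))
    (h2 : ∀ X Y, P X → P Y → P (X + Y))
    {X : ExteriorAlgebra ℂ M} (hX : memPow U 3 X) : P X := by
  unfold memPow at hX
  rw [pow_succ] at hX
  refine Submodule.mul_induction_on hX ?_ h2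
  rintro m hm _ ⟨z, hz, rfl⟩
  refine memPow_two_ind (P := fun m => P (m * ιι z)) (fun x hx y hy => h1 x hx y hy z hz) ?_ hm
  intro X Y hX hY
  rw [add_mul]
  exact h2 _ _ hX hY

theorem ctr_mem_three {U : Submodule ℂ M} {d : Dual ℂ M} (hd : ∀ x ∈ U, d x = 0)
    {X : ExteriorAlgebra ℂ M} (hX : memPow U 3 X) : ctr d X = 0 := by
  refine memPow_three_ind (P := fun X => ctr d X = 0) ?_ ?_ hX
  · intro x hx y hy z hz
    simp [ctr_three, hd x hx, hd y hy, hd z hz]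
  · intro X Y h1 h2
    simp [h1, h2]

theorem ctr_mem_two {U : Submodule ℂ M} {d : Dual ℂ M} (hd : ∀ x ∈ U, d x = 0) {v : M}
    (hv : d v = 1) {X : ExteriorAlgebra ℂ M} (hX : memPow U 2 X) : ctr d (X * ιι v) = X := by
  refine memPow_two_ind (P := fun X => ctr d (X * ιι v) = X) ?_ ?_ hX
  · intro x hx y hy
    simp [ctr_three, hd x hx, hd y hy, hv]
  · intro X Y h1 h2
    simp [add_mul, h1, h2]

theorem ctr_two_v {U : Submodule ℂ M} {d : Dual ℂ M} {v : M}
    (hv : d v = 0) {X : ExteriorAlgebra ℂ M} (hX : memPow U 2 X) :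
    ∃ x, ctr d (X * ιι v) = ιι x * ιι v := by
  refine memPow_two_ind (P := fun X => ∃ x, ctr d (X * ιι v) = ιι x * ιι v) ?_ ?_ hX
  · intro x hx y hy
    refine ⟨d x • y - d y • x, ?_⟩
    simp [ctr_three, hv, sub_mul]
  · rintro X Y ⟨x, h1⟩ ⟨y, h2⟩
    exact ⟨x + y, by simp [add_mul, h1, h2]⟩

theorem dec_zero (A : Submodule ℂ M) {k : ℕ} (hk : 0 < k) : Dec A k 0 := by
  refine ⟨fun _ => 0, fun _ => A.zero_mem, ?_⟩
  obtain ⟨k, rfl⟩ := Nat.exists_eq_succ_of_ne_zero hk.ne'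
  simp [List.ofFn_succ]

theorem lenLE_succ {A : Submodule ℂ M} {k : ℕ} (hk : 0 < k) {l : ℕ} {X : ExteriorAlgebra ℂ M}
    (h : LenLE A k l X) : LenLE A k (l + 1) X := by
  obtain ⟨Y, hY, rfl⟩ := h
  refine ⟨Fin.cons 0 Y, ?_, ?_⟩
  · intro i
    refine Fin.cases ?_ ?_ i
    · simpa using dec_zero A hk
    · simpa using hY
  · simp [Fin.sum_univ_succ]

theorem lenLE_mono {A : Submodule ℂ M} {k : ℕ} (hk : 0 < k) {l n : ℕ} (hl : l ≤ n)
    {X : ExteriorAlgebra ℂ M} (h : LenLE A k l X) : LenLE A k n X := by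
  induction n, hl using Nat.le_induction with
  | base => exact h
  | succ n _ ih => exact lenLE_succ hk ih

theorem dec_two_iff {X : ExteriorAlgebra ℂ M} :
    Dec (⊤ : Submodule ℂ M) 2 X ↔ ∃ x y, X = ιι x * ιι y := by
  constructor
  · rintro ⟨v, -, rfl⟩
    exact ⟨v 0, v 1, by simp [List.ofFn_succ]⟩
  · rintro ⟨x, y, rfl⟩
    exact ⟨![x, y], by simp, by simp [List.ofFn_succ]⟩

theorem dec_three_iff {X : ExteriorAlgebra ℂ M} :
    Dec (⊤ : Submodule ℂ M) 3 X ↔ ∃ x y z, X = ιι x * ιι y * ιι z := by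
  constructor
  · rintro ⟨v, -, rfl⟩
    exact ⟨v 0, v 1, v 2, by simp [List.ofFn_succ, mul_assoc]⟩
  · rintro ⟨x, y, z, rfl⟩
    exact ⟨![x, y, z], by simp, by simp [List.ofFn_succ, mul_assoc]⟩

theorem supp_top (B : Basis (Fin 7) ℂ M) : supp 3 (phiStd (F := ℂ) B) = ⊤ := by
  unfold supp
  rw [sInf_eq_top]
  intro U hU
  by_contra hne
  obtain ⟨d, hd, h⟩ := exists_dual hne
  refine hd (key B d ?_)
  rw [ctr_mem_three h hU]
  intro a b c e
  simp

theorem not_len (B : Basis (Fin 7) ℂ M) {j : ℕ} (hj : j < 4) :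
    ¬ LenLE (⊤ : Submodule ℂ M) 3 j (phiStd (F := ℂ) B) := by
  intro h
  obtain ⟨Y, hY, hX⟩ := lenLE_mono (by norm_num) (show j ≤ 3 by omega) h
  obtain ⟨x, y, z, h0⟩ := dec_three_iff.1 (hY 0)
  obtain ⟨x', y', z', h1⟩ := dec_three_iff.1 (hY 1)
  obtain ⟨x'', y'', z'', h2⟩ := dec_three_iff.1 (hY 2)
  have : FiniteDimensional ℂ M := B.finiteDimensional_of_finite
  obtain ⟨d, hd, hz⟩ := exists_dual_small (n := 6) (by simp [finrank_eq_card_basis B])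
    ![x, y, z, x', y', z']
  refine hd (key B d ?_)
  have e0 := hz 0
  have e1 := hz 1
  have e2 := hz 2
  have e3 := hz 3
  have e4 := hz 4
  have e5 := hz 5
  simp at e0 e1 e2 e3 e4 e5
  have : ctr d (phiStd (F := ℂ) B) = ctr d (ιι x'' * ιι y'' * ιι z'') := by
    rw [hX, Fin.sum_univ_three, h0, h1, h2, map_add, map_add, ctr_three d x, ctr_three d x']
    simp [e0, e1, e2, e3, e4, e5]
  rw [this]
  exact plu_three _ _ _ _

theorem not_r (B : Basis (Fin 7) ℂ M) {v : M} {U : Submodule ℂ M} {X₁ X₂ : ExteriorAlgebra ℂ M}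
    (hS : Split 3 (phiStd (F := ℂ) B) v U X₁ X₂) {j : ℕ} (hj : j < 2) :
    ¬ LenLE (⊤ : Submodule ℂ M) 3 j X₂ := by
  intro h
  obtain ⟨Y, hY, hX⟩ := lenLE_mono (by norm_num) (show j ≤ 1 by omega) h
  obtain ⟨x, y, z, h0⟩ := dec_three_iff.1 (hY 0)
  have : FiniteDimensional ℂ M := B.finiteDimensional_of_finite
  obtain ⟨d, hd, hz⟩ := exists_dual_small (n := 4) (by simp [finrank_eq_card_basis B])
    ![x, y, z, v]
  refine hd (key B d ?_)
  have e0 := hz 0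
  have e1 := hz 1
  have e2 := hz 2
  have e3 := hz 3
  simp at e0 e1 e2 e3
  obtain ⟨-, -, -, -, hm, -, he⟩ := hS
  obtain ⟨w, hw⟩ := ctr_two_v (d := d) e3 hm
  rw [he, hX, Fin.sum_univ_one, h0, map_add, hw, ctr_three]
  simp only [e0, e1, e2, zero_smul, sub_zero, add_zero]
  exact plu_two _ _

theorem not_m (B : Basis (Fin 7) ℂ M) {v : M} {U : Submodule ℂ M} {X₁ X₂ : ExteriorAlgebra ℂ M}
    (hS : Split 3 (phiStd (F := ℂ) B) v U X₁ X₂) {j : ℕ} (hj : j < 2) :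
    ¬ LenLE (⊤ : Submodule ℂ M) 2 j X₁ := by
  intro h
  obtain ⟨Y, hY, hX⟩ := lenLE_mono (by norm_num) (show j ≤ 1 by omega) h
  obtain ⟨x, y, h0⟩ := dec_two_iff.1 (hY 0)
  obtain ⟨-, hv, -, hi, hm, hm3, he⟩ := hS
  have hvU : v ∉ U := by
    intro hvU
    apply hv
    rw [← Submodule.mem_bot ℂ, ← hi]
    exact ⟨hvU, Submodule.mem_span_singleton_self v⟩
  obtain ⟨d, hdv, hdU⟩ := Submodule.exists_le_ker_of_notMem hvU
  have hd : ∀ x ∈ U, ((d v)⁻¹ • d) x = 0 := by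
    intro x hx
    have : d x = 0 := hdU hx
    simp [this]
  have hd1 : ((d v)⁻¹ • d) v = 1 := by simp [hdv]
  have hk : (d v)⁻¹ • d = 0 := by
    refine key B _ ?_
    rw [he, map_add, ctr_mem_two hd hd1 hm, ctr_mem_three hd hm3, add_zero, hX,
      Fin.sum_univ_one, h0]
    exact plu_two _ _
  rw [hk] at hd1
  simp at hd1

theorem mk_split (B : Basis (Fin 7) ℂ M) (d : Dual ℂ M) (v : M) (hv : d v = 1)
    {X₁ X₂ : ExteriorAlgebra ℂ M} (h1 : memPow (LinearMap.ker d) 2 X₁)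
    (h2 : memPow (LinearMap.ker d) 3 X₂) (he : phiStd (F := ℂ) B = X₁ * ιι v + X₂) :
    Split 3 (phiStd (F := ℂ) B) v (LinearMap.ker d) X₁ X₂ := by
  refine ⟨by simp [supp_top], ?_, ?_, ?_, h1, h2, he⟩
  · rintro rfl
    simp at hv
  · rw [supp_top, eq_top_iff]
    intro x _
    have : x = (x - d x • v) + d x • v := by abel
    rw [this]
    refine Submodule.add_mem_sup ?_ (Submodule.smul_mem _ _ (Submodule.mem_span_singleton_self v))
    simp [hv]
  · rw [eq_bot_iff]
    rintro x ⟨hx, hx'⟩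
    obtain ⟨c, rfl⟩ := Submodule.mem_span_singleton.1 hx'
    have : c = 0 := by simpa [hv] using hx
    simp [this]

theorem memPow_two {U : Submodule ℂ M} {x y : M} (hx : x ∈ U) (hy : y ∈ U) :
    memPow U 2 (ιι x * ιι y) := by
  unfold memPow
  rw [pow_two]
  exact Submodule.mul_mem_mul (Submodule.mem_map_of_mem hx) (Submodule.mem_map_of_mem hy)

theorem memPow_three {U : Submodule ℂ M} {x y z : M} (hx : x ∈ U) (hy : y ∈ U) (hz : z ∈ U) :
    memPow U 3 (ιι x * ιι y * ιι z) := by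
  unfold memPow
  rw [pow_succ]
  exact Submodule.mul_mem_mul (memPow_two hx hy) (Submodule.mem_map_of_mem hz)

theorem memPow_add {U : Submodule ℂ M} {k : ℕ} {X Y : ExteriorAlgebra ℂ M} (hx : memPow U k X)
    (hy : memPow U k Y) : memPow U k (X + Y) := Submodule.add_mem _ hx hy

theorem sq0 (x : M) : ιι x * ιι x = 0 := ExteriorAlgebra.ι_sq_zero x

theorem sq0' (x : M) (Y : ExteriorAlgebra ℂ M) : ιι x * (ιι x * Y) = 0 := by
  rw [← mul_assoc, sq0, zero_mul]

theorem swap (x y : M) : ιι x * ιι y = - (ιι y * ιι x) :=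
  eq_neg_of_add_eq_zero_left (ExteriorAlgebra.ι_add_mul_swap x y)

theorem swap' (x y : M) (Y : ExteriorAlgebra ℂ M) :
    ιι x * (ιι y * Y) = - (ιι y * (ιι x * Y)) := by
  rw [← mul_assoc, swap, neg_mul, mul_assoc]

open Complex in
theorem id_len (B : Fin 7 → M) : phiStd (F := ℂ) B =
    ιι ((I / 2) • (B 0 + I • B 1)) * ιι (B 0 - I • B 1) * ιι (B 6) +
    ιι ((I / 2) • (B 2 + I • B 3 + (B 4 - I • B 5))) * ιι (B 2 - I • B 3 - (B 4 + I • B 5)) *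
      ιι (B 6) +
    ιι ((1 / 2 : ℂ) • (B 0 + I • B 1 + I • B 6)) * ιι (B 2 + I • B 3) * ιι (B 4 + I • B 5) +
    ιι ((1 / 2 : ℂ) • (B 0 - I • B 1 + I • B 6)) * ιι (B 2 - I • B 3) * ιι (B 4 - I • B 5) := by
  simp only [phiStd, wedge3, map_add, map_sub, map_smul, add_mul, sub_mul, mul_add, mul_sub,
    smul_mul_assoc, mul_smul_comm, smul_add, smul_sub, smul_smul, mul_assoc, sq0, sq0',
    swap (B 1) (B 0), swap' (B 1) (B 0), swap (B 3) (B 2), swap' (B 3) (B 2),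
    swap (B 5) (B 4), swap' (B 5) (B 4), swap' (B 4) (B 2), swap' (B 4) (B 3),
    swap' (B 5) (B 2), swap' (B 5) (B 3), swap' (B 6) (B 2), swap' (B 6) (B 3),
    swap (B 6) (B 4), swap (B 6) (B 5), mul_neg, neg_mul, zero_mul, smul_neg, smul_zero, mul_zero]
  match_scalars <;> grind [I_mul_I]

open Complex in
theorem id_r (B : Fin 7 → M) : phiStd (F := ℂ) B =
    (ιι (B 0) * ιι (B 1) + ιι (B 2) * ιι (B 3) + ιι (B 4) * ιι (B 5)) * ιι (B 6) +
    (ιι ((1 / 2 : ℂ) • (B 0 + I • B 1)) * ιι (B 2 + I • B 3) * ιι (B 4 + I • B 5) +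
    ιι ((1 / 2 : ℂ) • (B 0 - I • B 1)) * ιι (B 2 - I • B 3) * ιι (B 4 - I • B 5)) := by
  simp only [phiStd, wedge3, map_add, map_sub, map_smul, add_mul, sub_mul, mul_add, mul_sub,
    smul_mul_assoc, mul_smul_comm, smul_add, smul_sub, smul_smul, mul_assoc]
  match_scalars <;> grind [I_mul_I]

open Complex in
theorem id_m (B : Fin 7 → M) : phiStd (F := ℂ) B =
    (ιι ((1 / 2 : ℂ) • (B 2 + I • B 3)) * ιι (B 4 + I • B 5) +
      ιι ((I / 2 : ℂ) • (B 0 - I • B 1)) * ιι (B 6)) * ιι (B 0 + I • B 1) +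
    (ιι ((1 / 2 : ℂ) • (B 0 - I • B 1)) * ιι (B 2 - I • B 3) * ιι (B 4 - I • B 5) +
      ιι (B 2) * ιι (B 3) * ιι (B 6) + ιι (B 4) * ιι (B 5) * ιι (B 6)) := by
  simp only [phiStd, wedge3, map_add, map_sub, map_smul, add_mul, sub_mul, mul_add, mul_sub,
    smul_mul_assoc, mul_smul_comm, smul_add, smul_sub, smul_smul, mul_assoc, sq0, sq0',
    swap (B 1) (B 0), swap' (B 1) (B 0), swap' (B 2) (B 0), swap' (B 3) (B 0),
    swap (B 4) (B 0), swap (B 5) (B 0), swap' (B 2) (B 1), swap' (B 3) (B 1),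
    swap (B 4) (B 1), swap (B 5) (B 1), swap (B 6) (B 0), swap (B 6) (B 1),
    mul_neg, smul_neg, smul_zero, mul_zero, neg_neg]
  match_scalars <;> grind [I_mul_I]

theorem lenLE_two {k : ℕ} {X Y : ExteriorAlgebra ℂ M} (hX : Dec (⊤ : Submodule ℂ M) k X)
    (hY : Dec (⊤ : Submodule ℂ M) k Y) : LenLE (⊤ : Submodule ℂ M) k 2 (X + Y) := by
  refine ⟨![X, Y], ?_, by simp⟩
  intro i
  fin_cases i
  · exact hX
  · exact hY

theorem lenLE_four {k : ℕ} {X Y Z T : ExteriorAlgebra ℂ M} (hX : Dec (⊤ : Submodule ℂ M) k X)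
    (hY : Dec (⊤ : Submodule ℂ M) k Y) (hZ : Dec (⊤ : Submodule ℂ M) k Z)
    (hT : Dec (⊤ : Submodule ℂ M) k T) : LenLE (⊤ : Submodule ℂ M) k 4 (X + Y + Z + T) := by
  refine ⟨![X, Y, Z, T], ?_, by simp [Fin.sum_univ_four]⟩
  intro i
  fin_cases i
  · exact hX
  · exact hY
  · exact hZ
  · exact hT

theorem len_le (B : Basis (Fin 7) ℂ M) :
    LenLE (⊤ : Submodule ℂ M) 3 4 (phiStd (F := ℂ) B) := by
  rw [id_len B]
  exact lenLE_four (dec_three_iff.2 ⟨_, _, _, rfl⟩) (dec_three_iff.2 ⟨_, _, _, rfl⟩)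
    (dec_three_iff.2 ⟨_, _, _, rfl⟩) (dec_three_iff.2 ⟨_, _, _, rfl⟩)

theorem main (B : Basis (Fin 7) ℂ M) :
    rkInv (F := ℂ) 3 (phiStd (F := ℂ) B) = 7 ∧
      len (⊤ : Submodule ℂ M) 3 (phiStd (F := ℂ) B) = 4 ∧
      rInv (⊤ : Submodule ℂ M) 3 (phiStd (F := ℂ) B) = 2 ∧
      mInv (⊤ : Submodule ℂ M) 3 (phiStd (F := ℂ) B) = 2 := by
  refine ⟨?_, ?_, ?_, ?_⟩
  · rw [rkInv, supp_top, finrank_top, finrank_eq_card_basis B]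
    simp
  · refine IsLeast.csInf_eq ⟨len_le B, ?_⟩
    intro j hj
    by_contra hlt
    exact not_len B (not_le.1 hlt) hj
  · refine IsLeast.csInf_eq ⟨?_, ?_⟩
    · have hS := mk_split B (B.coord 6) (B 6) (by simp) (X₁ := _) (X₂ := _) ?_ ?_ (id_r B)
      · refine ⟨_, _, _, _, hS, ?_, fun j hj => not_r B hS hj⟩
        exact lenLE_two (dec_three_iff.2 ⟨_, _, _, rfl⟩) (dec_three_iff.2 ⟨_, _, _, rfl⟩)
      · refine memPow_add (memPow_add (memPow_two ?_ ?_) (memPow_two ?_ ?_)) (memPow_two ?_ ?_)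
          <;> simp [Finsupp.single_apply]
      · refine memPow_add (memPow_three ?_ ?_ ?_) (memPow_three ?_ ?_ ?_)
          <;> simp [Finsupp.single_apply]
    · rintro j ⟨v, U, X₁, X₂, hS, hL, -⟩
      by_contra hlt
      exact not_r B hS (not_le.1 hlt) hL
  · refine IsLeast.csInf_eq ⟨?_, ?_⟩
    · have hI := Complex.I_mul_I
      have hS := mk_split B ((1 / 2 : ℂ) • (B.coord 0 - Complex.I • B.coord 1))
        (B 0 + Complex.I • B 1) ?_ (X₁ := _) (X₂ := _) ?_ ?_ (id_m B)
      · refine ⟨_, _, _, _, hS, ?_, fun j hj => not_m B hS hj⟩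
        exact lenLE_two (dec_two_iff.2 ⟨_, _, rfl⟩) (dec_two_iff.2 ⟨_, _, rfl⟩)
      · simp [Finsupp.single_apply]
        norm_num
      · refine memPow_add (memPow_two ?_ ?_) (memPow_two ?_ ?_)
          <;> simp [Finsupp.single_apply]
      · refine memPow_add (memPow_add (memPow_three ?_ ?_ ?_) (memPow_three ?_ ?_ ?_))
          (memPow_three ?_ ?_ ?_)
          <;> simp [Finsupp.single_apply]
    · rintro j ⟨v, U, X₁, X₂, hS, hL, -⟩
      by_contra hlt
      exact not_m B hS (not_le.1 hlt) hL

end Helpers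

/-- Let `W` be a seven-dimensional complex vector space with a basis
`E₁,…,E₇` and dual basis `E¹,…,E⁷`, and let
`φ := E^{127}+E^{347}+E^{567}+E^{135}-E^{146}-E^{236}-E^{245} ∈ Λ³W*`.
Then `(ρ(φ), l(φ), r(φ), m(φ)) = (7,4,2,2)`. -/
theorem stmt8 {W : Type*} [AddCommGroup W] [Module ℂ W] [FiniteDimensional ℂ W]
    (hW : finrank ℂ W = 7) (b : Basis (Fin 7) ℂ W) :
    rkInv (F := ℂ) 3 (phiStd (F := ℂ) (⇑b.dualBasis)) = 7 ∧
      len (⊤ : Submodule ℂ (Module.Dual ℂ W)) 3 (phiStd (F := ℂ) (⇑b.dualBasis)) = 4 ∧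
      rInv (⊤ : Submodule ℂ (Module.Dual ℂ W)) 3 (phiStd (F := ℂ) (⇑b.dualBasis)) = 2 ∧
      mInv (⊤ : Submodule ℂ (Module.Dual ℂ W)) 3 (phiStd (F := ℂ) (⇑b.dualBasis)) = 2 := by
  exact main b.dualBasis
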